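/- arXiv:2512.13203 — 5 statements merged into one kernel-verified Lean document; each statement's English description precedes it below -/
import Mathlib

section
/- Let R be a commutative ring, J : Matrix (Fin r) (Fin n) R, and let M = (Fin r → R) ⧸ LinearMap.range (Matrix.mulVecLin J) be the cokernel of the map R^n → R^r given by J. For every prime ideal P of R, the localization of M at P is trivial (a subsingleton) if and only if there exists an injection g : Fin r ↪ Fin n such that the r×r minor det(J.submatrix id g) does not belong to P. Consequently, the support of the first-order deformation module T¹ = coker(J_f) of a complete intersection is exactly the vanishing locus of the ideal of r×r minors of the Jacobian, i.e., the singular locus. -/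
/-!
The localization of `coker J` at `P` vanishes iff every vector of `R^r` has a multiple by some
`s ∉ P` in the column space of `J`.

If a maximal minor `d = det A` lies outside `P`, then `d • x = A (adj A) x` lies in the column
space for every `x`. Conversely, writing `s i • e i = J v i` with `s i ∉ P` gives
`J * V = diagonal s`, whose determinant `∏ s i` is not in `P`. Expanding `det (J * V)` over the
columns writes it as a combination of the determinants of `J.submatrix id f` for all functions
`f : Fin r → Fin n` (`det_mul_eq_sum_submatrix`); those with `f` not injective vanish, so some
maximal minor is not in `P`.
-/

/-- Unordered form of the Cauchy–Binet expansion: the sum runs over all functions, including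
the non-injective ones, whose terms vanish. -/
theorem det_mul_eq_sum_submatrix {R : Type*} [CommRing R] {r n : ℕ}
    (J : Matrix (Fin r) (Fin n) R) (V : Matrix (Fin n) (Fin r) R) :
    (J * V).det = ∑ f : Fin r → Fin n, (∏ i, V (f i) i) * (J.submatrix id f).det := by
  have hrow : (J * V).transpose = fun i => ∑ k, V k i • J.transpose k := by
    ext i j
    simp [Matrix.mul_apply, Finset.sum_apply, mul_comm]
  rw [← Matrix.det_transpose, hrow]
  change Matrix.detRowAlternating.toMultilinearMap (fun i => ∑ k, V k i • J.transpose k) = _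
  rw [MultilinearMap.map_sum]
  refine Finset.sum_congr rfl fun f _ => ?_
  rw [MultilinearMap.map_smul_univ, smul_eq_mul, ← Matrix.det_transpose (J.submatrix id f)]
  rfl

theorem submatrix_mulVec_mem_range {R : Type*} [CommRing R] {r n : ℕ}
    (J : Matrix (Fin r) (Fin n) R) (g : Fin r → Fin n) (w : Fin r → R) :
    (J.submatrix id g).mulVec w ∈ LinearMap.range J.mulVecLin := by
  rw [Matrix.range_mulVecLin, Matrix.mulVec_eq_sum]
  refine Submodule.sum_mem _ fun i _ => ?_
  rw [op_smul_eq_smul]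
  exact Submodule.smul_mem _ _ (Submodule.subset_span ⟨g i, rfl⟩)

/-- Let `J` be an `r × n` matrix over a commutative ring `R` and let
`M = R^r / J·R^n` be the cokernel of the map `R^n → R^r` given by `J`
(the first-order deformation module `T¹` of the complete intersection presented by `J`).
For every prime ideal `P` of `R`, the localization of `M` at `P` is trivial if and only
if some `r × r` minor of `J` does not lie in `P`.  Hence the support of `T¹` is exactly
the vanishing locus of the ideal of `r × r` minors of the Jacobian, i.e. the singular
locus. -/
theorem coker_localization_subsingleton_iff_minor_not_mem
    {R : Type*} [CommRing R] {r n : ℕ} (J : Matrix (Fin r) (Fin n) R)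
    (P : Ideal R) [P.IsPrime] :
    Subsingleton (LocalizedModule P.primeCompl
        ((Fin r → R) ⧸ LinearMap.range (Matrix.mulVecLin J))) ↔
      ∃ g : Fin r ↪ Fin n, (J.submatrix id ⇑g).det ∉ P := by
  rw [LocalizedModule.subsingleton_iff]
  constructor
  · intro h
    have hcol : ∀ i : Fin r, ∃ s ∈ P.primeCompl, ∃ v : Fin n → R,
        J.mulVec v = s • Pi.single i (1 : R) := by
      intro i
      obtain ⟨s, hs, hsi⟩ := h (Submodule.Quotient.mk (Pi.single i 1))
      rw [← Submodule.Quotient.mk_smul, Submodule.Quotient.mk_eq_zero] at hsi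
      exact ⟨s, hs, hsi⟩
    choose s hs v hv using hcol
    have hJV : J * Matrix.of (fun k i => v i k) = Matrix.diagonal s := by
      ext j i
      have := congrFun (hv i) j
      rw [Matrix.diagonal_apply]
      simp only [Matrix.mulVec, dotProduct, Pi.smul_apply, Pi.single_apply, smul_eq_mul] at this
      rw [Matrix.mul_apply]
      simp only [Matrix.of_apply, this]
      split_ifs with hji <;> simp [hji]
    by_contra! hminor
    have hdet : (Matrix.diagonal s).det ∈ P := by
      rw [← hJV, det_mul_eq_sum_submatrix]
      refine Ideal.sum_mem _ fun f _ => Ideal.mul_mem_left _ _ ?_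
      by_cases hf : Function.Injective f
      · exact hminor ⟨f, hf⟩
      · -- A repeated index gives two equal columns, so the determinant is zero.
        obtain ⟨a, b, hab, hne⟩ := Function.not_injective_iff.mp hf
        rw [Matrix.det_zero_of_column_eq hne fun k => by simp [hab]]
        exact P.zero_mem
    rw [Matrix.det_diagonal] at hdet
    exact (Submonoid.prod_mem P.primeCompl fun i _ => hs i) hdet
  · rintro ⟨g, hg⟩ m
    obtain ⟨x, rfl⟩ := Submodule.Quotient.mk_surjective _ m
    refine ⟨_, hg, ?_⟩
    rw [← Submodule.Quotient.mk_smul, Submodule.Quotient.mk_eq_zero]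
    have hx := submatrix_mulVec_mem_range J g ((J.submatrix id g).adjugate.mulVec x)
    rwa [Matrix.mulVec_mulVec, Matrix.mul_adjugate, Matrix.smul_mulVec, Matrix.one_mulVec] at hx
end

section
/- Let S = MvPolynomial (Fin n) ℂ, f : Fin r → S, I = Ideal.span (Set.range f), and A = S ⧸ I. The A-linear map from the module of ℂ-derivations Derivation ℂ A A to A^n sending a derivation D to the tuple (D(x̄ 0), …, D(x̄ (n−1))) is injective, and its range equals the kernel of the A-linear map A^n → A^r, v ↦ J̄·v, given by matrix-vector multiplication with the reduced Jacobian J̄. Hence Hom_A(Ω¹_{A/ℂ}, A) ≅ Der_ℂ(A) is identified with the module of ambient vector fields tangent to all the hypersurfaces f_i = 0. -/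
/-!
A derivation of `A = S/I` pulls back along `S → A` to a derivation `S → A`, and derivations out
of the polynomial ring satisfy the chain rule `D p = ∑ j, ∂p/∂xⱼ • D xⱼ`
(`derivation_eq_sum_pderiv`). Hence `D` is determined by its values on the variables, and
applying the chain rule to `f i`, which vanishes in `A`, shows that those values lie in `ker J̄`.

Conversely, lift `v ∈ ker J̄` to a tuple `w` of polynomials. The derivation `d = ∑ j, w j ∂/∂xⱼ`
of `S` sends each `f i` into `I` because `J̄ v = 0`, so by the Leibniz rule it preserves `I` and
descends to a derivation of `A` whose values on the variables are `v`.
-/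

open MvPolynomial

/-- The quotient algebra `A = S/I` where `S = ℂ[x₁,…,xₙ]` and
`I = (f 0, …, f (r-1))`. -/
abbrev CIRing (n r : ℕ) (f : Fin r → MvPolynomial (Fin n) ℂ) : Type :=
  MvPolynomial (Fin n) ℂ ⧸ Ideal.span (Set.range f)

/-- The reduced Jacobian matrix `J̄`, whose `(i, j)` entry is the class of
`∂f_i/∂x_j` in `A = S/I`. -/
noncomputable def redJacobian (n r : ℕ) (f : Fin r → MvPolynomial (Fin n) ℂ) :
    Matrix (Fin r) (Fin n) (CIRing n r f) :=
  Matrix.of fun i j => Ideal.Quotient.mk (Ideal.span (Set.range f)) (pderiv j (f i))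

/-- The chain rule for derivations out of a polynomial ring. -/
theorem derivation_eq_sum_pderiv {n : ℕ} {M : Type*} [AddCommGroup M] [Module ℂ M]
    [Module (MvPolynomial (Fin n) ℂ) M] [IsScalarTower ℂ (MvPolynomial (Fin n) ℂ) M]
    (D : Derivation ℂ (MvPolynomial (Fin n) ℂ) M) (p : MvPolynomial (Fin n) ℂ) :
    D p = ∑ j, pderiv j p • D (X j) := by
  have h : D = ∑ j, (LinearMap.toSpanSingleton (MvPolynomial (Fin n) ℂ) M (D (X j))).compDer
      (pderiv j) := by
    refine MvPolynomial.derivation_ext fun k => ?_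
    rw [← Derivation.coeFnAddMonoidHom_apply (∑ j, _), map_sum, Finset.sum_apply]
    simp [pderiv_X, Pi.single_apply, ite_smul]
  conv_lhs => rw [h]
  rw [← Derivation.coeFnAddMonoidHom_apply (∑ j, _), map_sum, Finset.sum_apply]
  simp

/-- The chain rule for a derivation of `A`, evaluated on classes of polynomials. -/
theorem derivation_mk_eq_sum {n r : ℕ} {f : Fin r → MvPolynomial (Fin n) ℂ}
    (D : Derivation ℂ (CIRing n r f) (CIRing n r f)) (p : MvPolynomial (Fin n) ℂ) :
    D (Ideal.Quotient.mk (Ideal.span (Set.range f)) p) =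
      ∑ j, Ideal.Quotient.mk (Ideal.span (Set.range f)) (pderiv j p) *
        D (Ideal.Quotient.mk (Ideal.span (Set.range f)) (X j)) := by
  refine (derivation_eq_sum_pderiv (D.compAlgebraMap (MvPolynomial (Fin n) ℂ)) p).trans ?_
  refine Finset.sum_congr rfl fun j _ => ?_
  change _ • D (Ideal.Quotient.mk (Ideal.span (Set.range f)) (X j)) = _
  obtain ⟨q, hq⟩ := Ideal.Quotient.mk_surjective
    (D (Ideal.Quotient.mk (Ideal.span (Set.range f)) (X j)))
  rw [← hq]
  rfl

/-- If the class of `w` in `A^n` lies in the kernel of the reduced Jacobian, the vector field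
`∑ j, w j ∂/∂xⱼ` preserves the ideal `I`. -/
theorem mkDerivation_preserves_ideal {n r : ℕ} {f : Fin r → MvPolynomial (Fin n) ℂ}
    (w : Fin n → MvPolynomial (Fin n) ℂ)
    (hw : (redJacobian n r f).mulVec
      (fun j => Ideal.Quotient.mk (Ideal.span (Set.range f)) (w j)) = 0)
    {p : MvPolynomial (Fin n) ℂ} (hp : p ∈ Ideal.span (Set.range f)) :
    mkDerivation ℂ w p ∈ Ideal.span (Set.range f) := by
  induction hp using Submodule.span_induction with
  | mem x hx =>
    obtain ⟨i, rfl⟩ := hx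
    have hi := congrFun hw i
    rw [derivation_eq_sum_pderiv, ← Ideal.Quotient.eq_zero_iff_mem, map_sum]
    simpa [Matrix.mulVec, dotProduct, redJacobian] using hi
  | zero => simp
  | add x y _ _ hx hy => rw [map_add]; exact add_mem hx hy
  | smul a x hx hdx =>
    rw [smul_eq_mul, Derivation.leibniz]
    exact add_mem (Ideal.mul_mem_left _ _ hdx) (Ideal.mul_mem_right _ _ hx)

/-- The `A`-linear map `Der_ℂ(A) → A^n`, `D ↦ (D(x̄ 0), …, D(x̄ (n-1)))`,
is injective and its range is exactly the kernel of the map `A^n → A^r` given by the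
reduced Jacobian matrix: derivations of `A` correspond to ambient vector fields tangent
to all the hypersurfaces `f_i = 0`. -/
theorem derivations_eq_tangent_fields
    (n r : ℕ) (f : Fin r → MvPolynomial (Fin n) ℂ) :
    ∃ Φ : Derivation ℂ (CIRing n r f) (CIRing n r f) →ₗ[CIRing n r f]
        (Fin n → CIRing n r f),
      (∀ (D : Derivation ℂ (CIRing n r f) (CIRing n r f)) (j : Fin n),
          Φ D j = D (Ideal.Quotient.mk (Ideal.span (Set.range f)) (X j))) ∧
      Function.Injective Φ ∧
      LinearMap.range Φ = LinearMap.ker (Matrix.mulVecLin (redJacobian n r f)) := by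
  refine ⟨{ toFun := fun D j => D (Ideal.Quotient.mk (Ideal.span (Set.range f)) (X j))
            map_add' := fun _ _ => rfl
            map_smul' := fun _ _ => rfl }, fun _ _ => rfl, ?_, ?_⟩
  · intro D E h
    ext a
    obtain ⟨p, rfl⟩ := Ideal.Quotient.mk_surjective a
    rw [derivation_mk_eq_sum, derivation_mk_eq_sum]
    exact Finset.sum_congr rfl fun j _ => congrArg _ (congrFun h j)
  · ext v
    rw [LinearMap.mem_range, LinearMap.mem_ker, Matrix.mulVecLin_apply]
    constructor
    · rintro ⟨D, rfl⟩
      ext i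
      have hfi : Ideal.Quotient.mk (Ideal.span (Set.range f)) (f i) = 0 :=
        Ideal.Quotient.eq_zero_iff_mem.mpr (Ideal.subset_span ⟨i, rfl⟩)
      have h := derivation_mk_eq_sum D (f i)
      rw [hfi, map_zero] at h
      exact h.symm
    · intro hv
      choose w hw using fun j => Ideal.Quotient.mk_surjective (v j)
      obtain rfl : (fun j => Ideal.Quotient.mk (Ideal.span (Set.range f)) (w j)) = v := funext hw
      have hd : ∀ p, Ideal.Quotient.mkₐ ℂ (Ideal.span (Set.range f)) p = 0 →
          Ideal.Quotient.mkₐ ℂ (Ideal.span (Set.range f)) (mkDerivation ℂ w p) = 0 :=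
        fun p hp => Ideal.Quotient.eq_zero_iff_mem.mpr
          (mkDerivation_preserves_ideal w hv (Ideal.Quotient.eq_zero_iff_mem.mp hp))
      refine ⟨Derivation.liftOfSurjective (Ideal.Quotient.mkₐ_surjective ℂ _) hd, ?_⟩
      funext j
      have h := Derivation.liftOfSurjective_apply (Ideal.Quotient.mkₐ_surjective ℂ _) hd (X j)
      rw [mkDerivation_X] at h
      exact h
end

section
/- Let A = ℂ[x,y]/(xy), the coordinate ring of the ordinary node. Then the first Ext group Ext¹_A(Ω[A⁄ℂ], A), taken in the category of A-modules, is isomorphic as an abelian group to ℂ. In other words, the node xy = 0 has one-dimensional first-order deformation space T¹, corresponding to its one-parameter smoothing xy = t. -/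
/-!
Write `A = ℂ[x,y]/(xy)`. The conormal sequence of `A`, written in the basis `dx`, `dy`, is
`0 → A → A² → Ω[A⁄ℂ] → 0` with `1 ↦ (y, x)` and `(a, b) ↦ a dx + b dy`
(`Node.exact_relMap_diffMap`, `Node.diffMap_surjective`). It is exact on the left as well, because
`x` and `y` are coprime primes of `ℂ[x,y]` (`Node.relMap_injective`), so it is a free resolution of
`Ω[A⁄ℂ]`. Hence `Ext¹(Ω[A⁄ℂ], A)` is the cokernel of the transpose `A² → A`,
`(b, c) ↦ by + cx` (`Node.ext_one_addEquiv`), which is `A/(x, y)`; evaluation at the singular point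
identifies it with `ℂ` (`Node.evalHom_eq_zero_iff`).
-/

open MvPolynomial CategoryTheory

/-- The coordinate ring `A = ℂ[x,y]/(xy)` of the ordinary node. -/
abbrev NodeRing : Type :=
  MvPolynomial (Fin 2) ℂ ⧸ Ideal.span {(X 0 * X 1 : MvPolynomial (Fin 2) ℂ)}

namespace Node

/-! ### `Ext¹` from a projective resolution of length one -/
open Limits ZeroObject

universe v u

section

variable {C : Type u} [Category.{v} C] [Abelian C]

/-- The objects of the complex `⋯ → 0 → K → P`, with `P` in degree `0`. -/
noncomputable def twoTermX (K P : C) : ℕ → C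
  | 0 => P
  | 1 => K
  | _ + 2 => 0

/-- The differentials of the complex `⋯ → 0 → K → P`. -/
noncomputable def twoTermD {K P : C} (f : K ⟶ P) : ∀ n, twoTermX K P (n + 1) ⟶ twoTermX K P n
  | 0 => f
  | _ + 1 => 0

/-- The chain complex `⋯ → 0 → K → P` given by a morphism `f : K ⟶ P`, with `P` in degree `0`. -/
noncomputable def twoTerm {K P : C} (f : K ⟶ P) : ChainComplex C ℕ :=
  ChainComplex.of (twoTermX K P) (twoTermD f) (fun _ ↦ zero_comp)

lemma twoTerm_d {K P : C} (f : K ⟶ P) : (twoTerm f).d 1 0 = f := 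
  ChainComplex.of_d (twoTermX K P) (twoTermD f) 0

lemma isZero_twoTerm_X {K P : C} (f : K ⟶ P) (n : ℕ) : IsZero ((twoTerm f).X (n + 2)) :=
  isZero_zero C

/-- A short exact sequence `0 → K → P → M → 0` with `K` and `P` projective, read as a projective
resolution of `M` of length one. -/
noncomputable def twoTermResolution {S : ShortComplex C} (hS : S.ShortExact)
    [h₁ : Projective S.X₁] [h₂ : Projective S.X₂] : ProjectiveResolution S.X₃ where
  complex := twoTerm S.f
  projective
    | 0 => h₂
    | 1 => h₁
    | n + 2 => inferInstanceAs (Projective (0 : C))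
  π := (ChainComplex.toSingle₀Equiv _ _).symm ⟨S.g, by rw [twoTerm_d]; exact S.zero⟩
  quasiIso := ⟨fun n => by
    have := hS.epi_g
    have := hS.mono_f
    match n with
    | 0 =>
      rw [ChainComplex.quasiIsoAt₀_iff, ShortComplex.quasiIso_iff_of_zeros']
      · refine (ShortComplex.exact_and_epi_g_iff_of_iso ?_).2 ⟨hS.exact, hS.epi_g⟩
        refine ShortComplex.isoMk (Iso.refl _) (Iso.refl _) (Iso.refl _) ?_ ?_
        · refine (Category.id_comp _).trans (Eq.trans ?_ (Category.comp_id _).symm)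
          exact (twoTerm_d S.f).symm
        · refine (Category.id_comp _).trans (Eq.trans ?_ (Category.comp_id _).symm)
          exact (ChainComplex.toSingle₀Equiv_symm_apply_f_zero
            (C := twoTerm S.f) S.g (by rw [twoTerm_d]; exact S.zero)).symm
      all_goals rfl
    | 1 =>
      rw [quasiIsoAt_iff_exactAt' _ _ (ChainComplex.exactAt_succ_single_obj _ _),
        HomologicalComplex.exactAt_iff' _ 2 1 0 (by simp) (by simp), 
        ShortComplex.exact_iff_mono _ ((isZero_twoTerm_X S.f 0).eq_of_src _ _)]
      change Mono ((twoTerm S.f).d 1 0)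
      rw [twoTerm_d]; exact hS.mono_f
    | n + 2 =>
      rw [quasiIsoAt_iff_exactAt' _ _ (ChainComplex.exactAt_succ_single_obj _ _),
        HomologicalComplex.exactAt_iff]
      exact ShortComplex.exact_of_isZero_X₂ _ (isZero_twoTerm_X S.f n)⟩
end

/-- The homology of `X₁ → X₂ → X₃` with zero second map is the cokernel of the first map, so any
surjection from `X₂` whose kernel is the image of `X₁` identifies it. -/
lemma homology_addEquiv {R : Type u} [Ring R] (S : ShortComplex (ModuleCat.{v} R)) (hg : S.g = 0)
    {B : Type*} [AddCommGroup B] (φ : S.X₂ →+ B) (hφ : Function.Surjective φ)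
    (hk : ∀ x, φ x = 0 ↔ ∃ y, S.f y = x) : Nonempty (S.homology ≃+ B) := by
  -- `j` identifies `X₂` with the cycles, since the second map vanishes.
  let j : S.X₂ ⟶ S.cycles := S.liftCycles (𝟙 _) (by simp [hg])
  let π : S.X₂ ⟶ S.homology := j ≫ S.homologyπ
  have hji : j ≫ S.iCycles = 𝟙 _ := by simp [j]
  have hij : S.iCycles ≫ j = 𝟙 _ := by simp [← cancel_mono S.iCycles, hji]
  have : IsIso j := ⟨S.iCycles, hji, hij⟩
  have hπ : Function.Surjective π := (ModuleCat.epi_iff_surjective _).1 inferInstance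
  have hfj : S.f ≫ j = S.toCycles := by simp [← cancel_mono S.iCycles, hji]
  have hker : ∀ x, π x = 0 ↔ ∃ y, S.f y = x := by
    intro x
    have hex : (ShortComplex.mk S.f π (by rw [← Category.assoc, hfj]; simp)).Exact := by
      refine ShortComplex.exact_of_iso (S₁ := ShortComplex.mk S.toCycles S.homologyπ (by simp)) ?_
        (ShortComplex.exact_of_g_is_cokernel _ S.homologyIsCokernel)
      exact ShortComplex.isoMk (Iso.refl _) (asIso j).symm (Iso.refl _)
        (by simp [← hfj]) (by simp [π])
    exact (ShortComplex.ShortExact.moduleCat_exact_iff_function_exact _).1 hex x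
  have e : π.hom.toAddMonoidHom.ker = φ.ker := by
    ext x
    exact (hker x).trans (hk x).symm
  exact ⟨(QuotientAddGroup.quotientKerEquivOfSurjective π.hom.toAddMonoidHom hπ).symm.trans
    ((QuotientAddGroup.quotientAddEquivOfEq e).trans
      (QuotientAddGroup.quotientKerEquivOfSurjective φ hφ))⟩

/-- For `0 → K → P → M → 0` exact with `K` and `P` projective, `Ext¹(M, Y)` is the cokernel of
`Hom(P, Y) → Hom(K, Y)`; the cokernel is presented by a surjection `φ` out of `Hom(K, Y)`. -/
lemma ext_one_addEquiv {R : Type u} [CommRing R] {S : ShortComplex (ModuleCat.{u} R)}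
    (hS : S.ShortExact) [Projective S.X₁] [Projective S.X₂] (Y : ModuleCat.{u} R)
    {B : Type*} [AddCommGroup B] (φ : (S.X₁ ⟶ Y) →+ B) (hφ : Function.Surjective φ)
    (hk : ∀ x, φ x = 0 ↔ ∃ y, S.f ≫ y = x) : 
    Nonempty (((Ext R (ModuleCat.{u} R) 1).obj (Opposite.op S.X₃)).obj Y ≃+ B) := by
  have i := (twoTermResolution hS).isoExt (R := R) 1 Y
  have i' := ShortComplex.homologyMapIso
    (((twoTerm S.f).linearYonedaObj R Y).isoSc' 0 1 2 (by simp) (by simp))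
  have hg : (((twoTerm S.f).linearYonedaObj R Y).sc' 0 1 2).g = 0 := by
    ext (x : S.X₁ ⟶ Y)
    exact (isZero_twoTerm_X S.f 0).eq_of_src _ _
  obtain ⟨e⟩ := homology_addEquiv (((twoTerm S.f).linearYonedaObj R Y).sc' 0 1 2) hg φ hφ
    (fun x ↦ (hk x).trans (by
      have (y : S.X₂ ⟶ Y) : (((twoTerm S.f).linearYonedaObj R Y).sc' 0 1 2).f y = S.f ≫ y := by
        change (twoTerm S.f).d 1 0 ≫ y = _
        rw [twoTerm_d]; rfl
      exact exists_congr fun y ↦ by rw [← this]; rfl))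
  exact ⟨(i ≪≫ i').toLinearEquiv.toAddEquiv.trans e⟩

/-! ### The free resolution of the Kähler differentials of the node -/

open KaehlerDifferential TensorProduct

/-- The quotient map `ℂ[x,y] → ℂ[x,y]/(xy)`. -/
noncomputable def mk : MvPolynomial (Fin 2) ℂ →+* NodeRing := Ideal.Quotient.mk _

lemma mk_surjective : Function.Surjective mk := Ideal.Quotient.mk_surjective

lemma mk_eq_zero_iff (p : MvPolynomial (Fin 2) ℂ) : mk p = 0 ↔ X 0 * X 1 ∣ p := by
  rw [mk, Ideal.Quotient.eq_zero_iff_mem, Ideal.mem_span_singleton]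

/-- The map `A → A²`, `1 ↦ (y, x)`, whose value at `1` records `d(xy) = y dx + x dy`. -/
noncomputable def relMap : NodeRing →ₗ[NodeRing] NodeRing × NodeRing :=
  LinearMap.toSpanSingleton NodeRing _ (mk (X 1), mk (X 0))

lemma relMap_apply (a : NodeRing) : relMap a = (a * mk (X 1), a * mk (X 0)) := rfl

/-- The map `A² → Ω[A⁄ℂ]`, `(a, b) ↦ a dx + b dy`. -/
noncomputable def diffMap : NodeRing × NodeRing →ₗ[NodeRing] Ω[NodeRing⁄ℂ] :=
  (LinearMap.toSpanSingleton NodeRing _ (D ℂ NodeRing (mk (X 0)))).coprod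
    (LinearMap.toSpanSingleton NodeRing _ (D ℂ NodeRing (mk (X 1))))

lemma diffMap_apply (a b : NodeRing) :
    diffMap (a, b) = a • D ℂ NodeRing (mk (X 0)) + b • D ℂ NodeRing (mk (X 1)) := rfl

/-- If `py` and `px` are both divisible by `xy`, then `p` is divisible by the coprime primes `x` and
`y`, hence by `xy`. -/
lemma relMap_injective : Function.Injective relMap := by
  rw [injective_iff_map_eq_zero]
  intro a ha
  obtain ⟨p, rfl⟩ := mk_surjective a
  rw [relMap_apply, Prod.mk_eq_zero, ← map_mul, ← map_mul, mk_eq_zero_iff, mk_eq_zero_iff] at ha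
  rw [mk_eq_zero_iff]
  have h0 : (X 0 : MvPolynomial (Fin 2) ℂ) ∣ p :=
    (mul_dvd_mul_iff_right (X_ne_zero 1)).1 ha.1
  have h1 : (X 1 : MvPolynomial (Fin 2) ℂ) ∣ p := by
    have h := ha.2
    rw [mul_comm p] at h
    exact (mul_dvd_mul_iff_left (X_ne_zero 0)).1 h
  obtain ⟨q, rfl⟩ := h0
  refine mul_dvd_mul_left _ ((X_prime.dvd_or_dvd h1).resolve_left ?_)
  rw [X_dvd_X]
  decide

lemma diffMap_surjective : Function.Surjective diffMap := by
  rw [← LinearMap.range_eq_top, ← top_le_iff, ← KaehlerDifferential.span_range_derivation,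
    Submodule.span_le]
  rintro _ ⟨a, rfl⟩
  obtain ⟨p, rfl⟩ := mk_surjective a
  induction p using MvPolynomial.induction_on with
  | C c =>
    have : mk (C c) = algebraMap ℂ NodeRing c := rfl
    rw [this, Derivation.map_algebraMap]
    exact zero_mem _
  | add p q hp hq =>
    rw [map_add, map_add]
    exact add_mem hp hq
  | mul_X p i hp =>
    rw [map_mul, Derivation.leibniz]
    refine add_mem (Submodule.smul_mem _ _ ?_) (Submodule.smul_mem _ _ hp)
    fin_cases i
    · exact ⟨(1, 0), by
        rw [diffMap, LinearMap.coprod_apply, map_zero, add_zero, LinearMap.toSpanSingleton_apply_one]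
        rfl⟩
    · exact ⟨(0, 1), by
        rw [diffMap, LinearMap.coprod_apply, map_zero, zero_add, LinearMap.toSpanSingleton_apply_one]
        rfl⟩

lemma diffMap_relMap (a : NodeRing) : diffMap (relMap a) = 0 := by
  have h : mk (X 0 * X 1) = 0 := (mk_eq_zero_iff _).2 dvd_rfl
  have h' := congrArg (D ℂ NodeRing) h
  rw [map_mul, Derivation.leibniz, map_zero] at h'
  have h1 : diffMap (mk (X 1), mk (X 0)) = 0 := by
    rw [diffMap_apply, add_comm]
    exact h'
  rw [relMap, LinearMap.toSpanSingleton_apply, map_smul, h1, smul_zero]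

/-- The derivation `p ↦ (∂p/∂x, ∂p/∂y)` of `ℂ[x,y]` with values in `A²`. -/
noncomputable def coordDeriv :
    Derivation ℂ (MvPolynomial (Fin 2) ℂ) (NodeRing × NodeRing) :=
  mkDerivation ℂ ![(1, 0), (0, 1)]

/-- The `A`-linear map `A ⊗ Ω[ℂ[x,y]⁄ℂ] → A²` reading off the coordinates in the basis `dx`, `dy`. -/
noncomputable def coordMap :
    NodeRing ⊗[MvPolynomial (Fin 2) ℂ] Ω[MvPolynomial (Fin 2) ℂ⁄ℂ] →ₗ[NodeRing]
      NodeRing × NodeRing :=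
  coordDeriv.liftKaehlerDifferential.liftBaseChange NodeRing

/-- The conormal sequence `I/I² → A ⊗ Ω[ℂ[x,y]⁄ℂ] → Ω[A⁄ℂ] → 0` for `I = (xy)`, written in the
coordinates `dx`, `dy`. -/
lemma exact_relMap_diffMap : Function.Exact relMap diffMap := by
  rintro ⟨a, b⟩
  refine ⟨fun h ↦ ?_, fun ⟨c, hc⟩ ↦ hc ▸ diffMap_relMap c⟩
  set t : NodeRing ⊗[MvPolynomial (Fin 2) ℂ] Ω[MvPolynomial (Fin 2) ℂ⁄ℂ] :=
    a ⊗ₜ D ℂ _ (X 0) + b ⊗ₜ D ℂ _ (X 1) with ht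
  have hψ : coordMap t = (a, b) := by
    simp [ht, coordMap, coordDeriv, mkDerivation_X]
  have hk : mapBaseChange ℂ (MvPolynomial (Fin 2) ℂ) NodeRing t = 0 := by
    rw [ht, map_add, mapBaseChange_tmul, mapBaseChange_tmul, map_D, map_D]
    exact h
  obtain ⟨s, hs⟩ := (exact_kerCotangentToTensor_mapBaseChange ℂ (MvPolynomial (Fin 2) ℂ) NodeRing
    mk_surjective t).1 hk
  obtain ⟨⟨p, hp⟩, rfl⟩ := Ideal.toCotangent_surjective _ s
  obtain ⟨q, rfl⟩ := (mk_eq_zero_iff p).1 hp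
  refine ⟨mk q, ?_⟩
  -- Modulo `xy`, the Leibniz rule gives `d(xyq) = q (y dx + x dy)`.
  rw [← hψ, ← hs, kerCotangentToTensor_toCotangent, relMap_apply]
  have hz : mk (X 0) * mk (X 1) = 0 := by
    rw [← map_mul]; exact (mk_eq_zero_iff _).2 dvd_rfl
  have hs (r : MvPolynomial (Fin 2) ℂ) (c : NodeRing) : r • c = mk r * c := Algebra.smul_def r c
  have hz' (w : NodeRing × NodeRing) : (X 0 * X 1 : MvPolynomial (Fin 2) ℂ) • w = 0 := by
    ext <;> simp [hs, hz]
  simp [coordMap, coordDeriv, mkDerivation_X, Derivation.leibniz, hs, hz']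

/-- Evaluation `A → ℂ` of functions on the node at the singular point. -/
noncomputable def evalZero : NodeRing →+* ℂ :=
  Ideal.Quotient.lift _ constantCoeff (by
    intro p hp
    obtain ⟨q, rfl⟩ := Ideal.mem_span_singleton.1 hp
    simp)

lemma evalZero_mk (p) : evalZero (mk p) = constantCoeff p := rfl

/-- The maximal ideal of the singular point is `(x, y)`. -/
lemma evalZero_eq_zero_iff (a : NodeRing) :
    evalZero a = 0 ↔ ∃ b c, b * mk (X 1) + c * mk (X 0) = a := by
  constructor
  · intro h
    obtain ⟨p, rfl⟩ := mk_surjective a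
    have : ∀ p : MvPolynomial (Fin 2) ℂ,
        ∃ b c : NodeRing, mk (C (constantCoeff p)) + (b * mk (X 1) + c * mk (X 0)) = mk p := by
      intro p
      induction p using MvPolynomial.induction_on with
      | C c => exact ⟨0, 0, by simp⟩
      | add p q hp hq =>
        obtain ⟨b, c, h⟩ := hp
        obtain ⟨b', c', h'⟩ := hq
        exact ⟨b + b', c + c', by rw [map_add, map_add, map_add, map_add, ← h, ← h']; ring⟩
      | mul_X p i hp =>
        fin_cases i
        · exact ⟨0, mk p, by simp⟩
        · exact ⟨mk p, 0, by simp⟩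
    obtain ⟨b, c, h'⟩ := this p
    rw [evalZero_mk] at h
    exact ⟨b, c, by simpa [h] using h'⟩
  · rintro ⟨b, c, rfl⟩
    simp [evalZero_mk]

lemma evalZero_surjective : Function.Surjective evalZero := fun z ↦ ⟨mk (C z), by simp [evalZero_mk]⟩

/-- The short complex `A → A² → Ω[A⁄ℂ]` presenting the Kähler differentials of the node. -/
noncomputable def kaehlerSeq : ShortComplex (ModuleCat.{0} NodeRing) :=
  ShortComplex.mk (ModuleCat.ofHom relMap) (ModuleCat.ofHom diffMap)
    (ModuleCat.hom_ext (LinearMap.ext diffMap_relMap))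

lemma kaehlerSeq_shortExact : kaehlerSeq.ShortExact where
  exact := (ShortComplex.ShortExact.moduleCat_exact_iff_function_exact _).2 exact_relMap_diffMap
  mono_f := (ModuleCat.mono_iff_injective _).2 relMap_injective
  epi_g := (ModuleCat.epi_iff_surjective _).2 diffMap_surjective

/-- The map `Hom(A, A) = A → ℂ` sending `h` to the value of `h 1` at the singular point. -/
noncomputable def evalHom :
    (ModuleCat.of NodeRing NodeRing ⟶ ModuleCat.of NodeRing NodeRing) →+ ℂ where
  toFun h := evalZero (h.hom 1)
  map_zero' := map_zero evalZero
  map_add' h h' := map_add evalZero (h.hom 1) (h'.hom 1)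

lemma evalHom_surjective : Function.Surjective evalHom := by
  intro z
  obtain ⟨a, rfl⟩ := evalZero_surjective z
  refine ⟨ModuleCat.ofHom (LinearMap.toSpanSingleton NodeRing NodeRing a), ?_⟩
  exact congrArg evalZero (LinearMap.toSpanSingleton_apply_one NodeRing NodeRing a)

/-- A map `(b, c) : A² → A` pulls back along `relMap` to multiplication by `by + cx`, so the maps
`A → A` that extend to `A²` are the multiplications by elements of `(x, y)`. -/
lemma evalHom_eq_zero_iff (h : ModuleCat.of NodeRing NodeRing ⟶ ModuleCat.of NodeRing NodeRing) :
    evalHom h = 0 ↔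
      ∃ s : ModuleCat.of NodeRing (NodeRing × NodeRing) ⟶ ModuleCat.of NodeRing NodeRing,
        ModuleCat.ofHom relMap ≫ s = h := by
  refine (evalZero_eq_zero_iff _).trans ⟨?_, ?_⟩
  · rintro ⟨b, c, hbc⟩
    refine ⟨ModuleCat.ofHom ((LinearMap.toSpanSingleton NodeRing NodeRing b).coprod
      (LinearMap.toSpanSingleton NodeRing NodeRing c)), ?_⟩
    apply ModuleCat.hom_ext
    apply LinearMap.ext_ring
    refine Eq.trans ?_ hbc
    change (1 * mk (X 1)) * b + (1 * mk (X 0)) * c = _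
    ring
  · rintro ⟨s, rfl⟩
    refine ⟨s.hom (1, 0), s.hom (0, 1), ?_⟩
    have hs : relMap 1 = mk (X 1) • ((1, 0) : NodeRing × NodeRing) + mk (X 0) • (0, 1) := by
      rw [relMap_apply]
      ext <;> simp
    have h2 : s.hom (relMap 1) = mk (X 1) * s.hom (1, 0) + mk (X 0) * s.hom (0, 1) := by
      rw [hs]
      refine (map_add s.hom _ _).trans ?_
      exact congrArg₂ (· + ·) (map_smul s.hom _ _) (map_smul s.hom _ _)
    refine Eq.trans ?_ h2.symm
    ring

end Node

/-- For the node `A = ℂ[x,y]/(xy)`, the first Ext group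
`Ext¹_A(Ω[A⁄ℂ], A)` (in the category of `A`-modules) is isomorphic to `ℂ` as an abelian
group: the node has one-dimensional first-order deformation space `T¹`. -/
theorem node_ext_one_kaehler_iso_complex :
    Nonempty
      ((((Ext NodeRing (ModuleCat NodeRing) 1).obj
            (Opposite.op (ModuleCat.of NodeRing (Ω[NodeRing⁄ℂ])))).obj
          (ModuleCat.of NodeRing NodeRing)) ≃+ ℂ) := by
  have : Projective Node.kaehlerSeq.X₁ :=
    ModuleCat.projective_of_free (Module.Free.chooseBasis NodeRing NodeRing)
  have : Projective Node.kaehlerSeq.X₂ :=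
    ModuleCat.projective_of_free (Module.Free.chooseBasis NodeRing (NodeRing × NodeRing))
  exact Node.ext_one_addEquiv Node.kaehlerSeq_shortExact (ModuleCat.of NodeRing NodeRing)
    Node.evalHom Node.evalHom_surjective Node.evalHom_eq_zero_iff
end

section
/- Let F = x⁴ + y⁴ + z⁴ ∈ ℂ[x,y,z] be the Fermat quartic. There exist no matrix M : Matrix (Fin 3) (Fin 3) ℂ with trace M = 0 and no scalar λ ∈ ℂ such that Σ_{i,j} M_{ij} x_j ∂F/∂x_i + λ·F = x²y². Hence the monomial x²y² does not lie in the subspace spanned by F and the image of the infinitesimal sl₃-action on F, so the first-order deformation F + ε·x²y² of the plane quartic is nontrivial (not induced by an infinitesimal projective coordinate change and rescaling). -/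
/-!
Each partial derivative of the Fermat quartic is four times the cube of a variable, so every
monomial of `δ_M F + λ F` is divisible by a cube of a variable, and `x²y²` cannot occur. Restricting
to the line `(1, t, 0)` turns this into the absence of a `t²` term in a polynomial in `t`, which is
tested by evaluating at the fourth roots of unity.
-/

open MvPolynomial

/-- The Fermat quartic `F = x⁴ + y⁴ + z⁴ ∈ ℂ[x,y,z]`. -/
noncomputable def fermatQuartic : MvPolynomial (Fin 3) ℂ :=
  X 0 ^ 4 + X 1 ^ 4 + X 2 ^ 4

/-- There are no traceless matrix `M ∈ sl₃` and scalar `λ ∈ ℂ` with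
`δ_M F + λ·F = x²y²` for the Fermat quartic `F = x⁴ + y⁴ + z⁴`: the monomial `x²y²`
does not lie in the span of `F` and the image of the infinitesimal `sl₃`-action, so the
first-order deformation `F + ε·x²y²` is nontrivial. -/
theorem fermat_quartic_x2y2_nontrivial_deformation :
    ¬ ∃ (M : Matrix (Fin 3) (Fin 3) ℂ) (lam : ℂ),
        Matrix.trace M = 0 ∧
        (∑ i : Fin 3, ∑ j : Fin 3, (C (M i j) * X j) * pderiv i fermatQuartic) +
            C lam * fermatQuartic =
          X 0 ^ 2 * X 1 ^ 2 := by
  rintro ⟨M, lam, -, h⟩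
  have key : ∀ t : ℂ, 4 * M 0 0 + lam + 4 * M 0 1 * t + 4 * M 1 0 * t ^ 3
      + (4 * M 1 1 + lam) * t ^ 4 = t ^ 2 := by
    intro t
    have ht := congrArg (eval ![1, t, 0]) h
    simp [fermatQuartic, Fin.sum_univ_three, pderiv_X, Pi.single_apply] at ht
    linear_combination ht
  -- Weighting the values at the fourth roots of unity by `t⁻²` isolates the coefficient of `t²`.
  have h1 := key 1
  have h2 := key (-1)
  have h3 := key Complex.I
  have h4 := key (-Complex.I)
  have : (4 : ℂ) = 0 := by
    linear_combination h3 + h4 - h1 - h2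
      + (2 - 2 * (4 * M 1 1 + lam) * (Complex.I ^ 2 - 1)) * Complex.I_sq
  norm_num at this
end

section
/- Let A = ℂ[x,y]/(xy) be the coordinate ring of the node, and write x̄, ȳ for the classes of the variables. Then for every ℂ-derivation D : A → A (an element of Derivation ℂ A A), one has D(x̄) ∈ Ideal.span {x̄} and D(ȳ) ∈ Ideal.span {ȳ}. Geometrically: every vector field on the node vanishes at the singular point along each of the two branches, so derivations on the node correspond exactly to vector fields on the normalization vanishing at the preimages of the node. -/
/-!
Applying a derivation `D` to `x̄ * ȳ = 0` gives `x̄ * D ȳ + ȳ * D x̄ = 0`, and multiplying by `ȳ`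
kills the first term, so `ȳ² * D x̄ = 0`. Lifting to `ℂ[x,y]`, a representative `p` of `D x̄`
satisfies `xy ∣ y² p`; since `x` is prime and does not divide `y`, it divides `p`. The argument for
`ȳ` is the same with the variables exchanged.
-/

open MvPolynomial

/-- The class `x̄` of the variable `x` in `ℂ[x,y]/(xy)`. -/
noncomputable def nodeX : NodeRing :=
  Ideal.Quotient.mk (Ideal.span {(X 0 * X 1 : MvPolynomial (Fin 2) ℂ)}) (X 0)

/-- The class `ȳ` of the variable `y` in `ℂ[x,y]/(xy)`. -/
noncomputable def nodeY : NodeRing :=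
  Ideal.Quotient.mk (Ideal.span {(X 0 * X 1 : MvPolynomial (Fin 2) ℂ)}) (X 1)

/-- The annihilator of the square of one variable lies in the ideal of the other: `i ≠ j` is
arbitrary so that the lemma serves both branches. -/
lemma mk_mem_span_of_sq_mul_eq_zero {i j : Fin 2} (hij : i ≠ j)
    (hI : (X i * X j : MvPolynomial (Fin 2) ℂ) = X 0 * X 1) (a : NodeRing)
    (h : (Ideal.Quotient.mk (Ideal.span {(X 0 * X 1 : MvPolynomial (Fin 2) ℂ)}) (X j)) ^ 2 * a
      = 0) :
    a ∈ Ideal.span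
      {(Ideal.Quotient.mk (Ideal.span {(X 0 * X 1 : MvPolynomial (Fin 2) ℂ)}) (X i))} := by
  obtain ⟨p, rfl⟩ := Ideal.Quotient.mk_surjective a
  rw [← map_pow, ← map_mul, Ideal.Quotient.eq_zero_iff_mem, Ideal.mem_span_singleton, ← hI] at h
  have hp : Prime (X i : MvPolynomial (Fin 2) ℂ) := X_prime
  have hn : ¬ (X i : MvPolynomial (Fin 2) ℂ) ∣ X j := by
    rw [X_dvd_X]
    simpa using hij
  have hd : (X i : MvPolynomial (Fin 2) ℂ) ∣ p :=
    (hp.dvd_or_dvd ((dvd_mul_right _ _).trans h)).resolve_left fun h' => hn (hp.dvd_of_dvd_pow h')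
  exact Ideal.mem_span_singleton.mpr (map_dvd _ hd)

lemma nodeX_mul_nodeY : nodeX * nodeY = 0 := by
  rw [nodeX, nodeY, ← map_mul, Ideal.Quotient.eq_zero_iff_mem]
  exact Ideal.mem_span_singleton_self _

/-- Every `ℂ`-derivation `D : A → A` of the node `A = ℂ[x,y]/(xy)`
satisfies `D(x̄) ∈ (x̄)` and `D(ȳ) ∈ (ȳ)`: every vector field on the node vanishes at
the singular point along each of the two branches. -/
theorem node_derivation_vanishes_along_branches (D : Derivation ℂ NodeRing NodeRing) :
    D nodeX ∈ Ideal.span {nodeX} ∧ D nodeY ∈ Ideal.span {nodeY} := by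
  have hxy := nodeX_mul_nodeY
  have hD : nodeX * D nodeY + nodeY * D nodeX = 0 := by
    simpa [hxy] using (D.leibniz nodeX nodeY).symm
  constructor
  · refine mk_mem_span_of_sq_mul_eq_zero (i := 0) (j := 1) (by decide) rfl _ ?_
    change nodeY ^ 2 * D nodeX = 0
    linear_combination nodeY * hD - D nodeY * hxy
  · refine mk_mem_span_of_sq_mul_eq_zero (i := 1) (j := 0) (by decide) (mul_comm _ _) _ ?_
    change nodeX ^ 2 * D nodeY = 0
    linear_combination nodeX * hD - D nodeX * hxy
end
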